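/- For every integer m ≥ 3, the polynomial f_m(X) divides X^{2^{m+2}-1} + 1 in F_2[X]. -/

import Mathlib

open Polynomial

/-- `fibSet m` is the set of fibbinary integers below `2^m`: integers in `{0,…,2^m-1}`
whose binary representation has no two consecutive ones. -/
noncomputable def fibSet (m : ℕ) : Finset ℕ :=
  @Finset.filter _ (fun i => ∀ j : ℕ, ¬(i.testBit j ∧ i.testBit (j + 1)))
    (Classical.decPred _) (Finset.range (2 ^ m))

/-- The `m`-th fibbinary polynomial over `F_2`. -/
noncomputable def fibPoly (m : ℕ) : Polynomial (ZMod 2) :=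
  ∑ i ∈ fibSet m, X ^ i

/-!
Sorting fibbinary numbers by their lowest bits gives `f_{m+2} = f_{m+1}² + X f_m⁴`. This recursion
is additive in characteristic two, and both `m ↦ f_{m+1}` and `m ↦ X^{2^{m+1}} f_m` satisfy it, so
`f_{m+2} = f_{m+1} + X^{2^{m+1}} f_m` (sorting by the highest bits) follows by induction. Hence
`f_{m+1}² ≡ f_{m+1}` modulo `f_m`; as the two are coprime, `f_{m+1} ≡ 1`, and then
`f_{m+2} ≡ 1` as well. Now the two expressions for `f_{m+3}` read `1 + X ≡ 1 + X^{2^{m+2}}`,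
so `f_m` divides `X^{2^{m+2}} - X`, and it is coprime to `X`.
-/

/-- `IsFibbinary i` says that `i` is a fibbinary number: no two consecutive bits of `i` are both
one. It is the membership condition of `fibSet m` without the bound `i < 2 ^ m`. -/
def IsFibbinary (i : ℕ) : Prop := ∀ j : ℕ, ¬(i.testBit j ∧ i.testBit (j + 1))

lemma mem_fibSet {m i : ℕ} : i ∈ fibSet m ↔ i < 2 ^ m ∧ IsFibbinary i := by
  simp only [fibSet, IsFibbinary, Finset.mem_filter, Finset.mem_range]

lemma isFibbinary_zero : IsFibbinary 0 := by simp [IsFibbinary]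

lemma isFibbinary_two_mul {k : ℕ} : IsFibbinary (2 * k) ↔ IsFibbinary k := by
  rw [IsFibbinary, ← Nat.and_forall_add_one]
  simp [IsFibbinary, Nat.testBit_succ]

lemma isFibbinary_two_mul_add_one {k : ℕ} :
    IsFibbinary (2 * k + 1) ↔ Even k ∧ IsFibbinary k := by
  have half : (2 * k + 1) / 2 = k := by lia
  rw [IsFibbinary, ← Nat.and_forall_add_one]
  simp [IsFibbinary, Nat.testBit_succ, half, Nat.even_iff]

lemma isFibbinary_four_mul_add_one {k : ℕ} : IsFibbinary (4 * k + 1) ↔ IsFibbinary k := by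
  rw [show 4 * k + 1 = 2 * (2 * k) + 1 by ring, isFibbinary_two_mul_add_one, isFibbinary_two_mul]
  simp

lemma fibSet_zero : fibSet 0 = {0} := by
  ext i
  simp +contextual [mem_fibSet, isFibbinary_zero]

lemma fibSet_one : fibSet 1 = {0, 1} := by
  have isFibbinary_one : IsFibbinary 1 := isFibbinary_four_mul_add_one.2 isFibbinary_zero
  ext i
  rw [mem_fibSet, pow_one, Nat.lt_succ_iff, Nat.le_one_iff_eq_zero_or_eq_one, Finset.mem_insert,
    Finset.mem_singleton, and_iff_left_iff_imp]
  rintro (rfl | rfl)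
  exacts [isFibbinary_zero, isFibbinary_one]

lemma fibSet_add_two (m : ℕ) :
    fibSet (m + 2) = (fibSet (m + 1)).image (2 * ·) ∪ (fibSet m).image (4 * · + 1) := by
  ext i
  simp only [Finset.mem_union, Finset.mem_image, mem_fibSet]
  constructor
  · rintro ⟨hlt, hi⟩
    obtain ⟨k, rfl | rfl⟩ := Nat.even_or_odd' i
    · exact .inl ⟨k, ⟨by lia, isFibbinary_two_mul.1 hi⟩, rfl⟩
    · obtain ⟨⟨l, rfl⟩, -⟩ := isFibbinary_two_mul_add_one.1 hi
      rw [show 2 * (l + l) + 1 = 4 * l + 1 by ring] at hlt hi ⊢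
      exact .inr ⟨l, ⟨by lia, isFibbinary_four_mul_add_one.1 hi⟩, rfl⟩
  · rintro (⟨k, ⟨hlt, hk⟩, rfl⟩ | ⟨k, ⟨hlt, hk⟩, rfl⟩)
    · exact ⟨by lia, isFibbinary_two_mul.2 hk⟩
    · exact ⟨by lia, isFibbinary_four_mul_add_one.2 hk⟩

lemma fibPoly_zero : fibPoly 0 = 1 := by simp [fibPoly, fibSet_zero]

lemma fibPoly_one : fibPoly 1 = 1 + X := by simp [fibPoly, fibSet_one]

lemma fibPoly_pow_two_pow (m k : ℕ) :
    fibPoly m ^ 2 ^ k = ∑ i ∈ fibSet m, X ^ (2 ^ k * i) := by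
  simp only [fibPoly, sum_pow_char_pow, ← pow_mul, mul_comm]

lemma fibPoly_add_two_eq_sq_add (m : ℕ) :
    fibPoly (m + 2) = fibPoly (m + 1) ^ 2 + X * fibPoly m ^ 4 := by
  have disjoint_even_odd :
      Disjoint ((fibSet (m + 1)).image (2 * ·)) ((fibSet m).image (4 * · + 1)) := by
    simp only [Finset.disjoint_left, Finset.mem_image]
    rintro _ ⟨a, -, rfl⟩ ⟨b, -, hab⟩
    lia
  calc fibPoly (m + 2)
      = ∑ i ∈ fibSet (m + 1), X ^ (2 * i) + ∑ i ∈ fibSet m, X ^ (4 * i + 1) := by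
        rw [fibPoly, fibSet_add_two, Finset.sum_union disjoint_even_odd,
          Finset.sum_image fun a _ b _ hab ↦ by lia, Finset.sum_image fun a _ b _ hab ↦ by lia]
    _ = fibPoly (m + 1) ^ 2 ^ 1 + X * fibPoly m ^ 2 ^ 2 := by
        rw [fibPoly_pow_two_pow, fibPoly_pow_two_pow, Finset.mul_sum]
        simp only [← pow_succ', Nat.reducePow]
    _ = fibPoly (m + 1) ^ 2 + X * fibPoly m ^ 4 := by norm_num

lemma fibPoly_two : fibPoly 2 = 1 + X + X ^ 2 := by
  rw [fibPoly_add_two_eq_sq_add, zero_add, fibPoly_one, fibPoly_zero, CharTwo.add_sq]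
  ring

lemma fibPoly_add_two_eq_add_X_pow_mul (m : ℕ) :
    fibPoly (m + 2) = fibPoly (m + 1) + X ^ 2 ^ (m + 1) * fibPoly m := by
  induction m using Nat.twoStepInduction with
  | zero =>
    rw [zero_add, zero_add, fibPoly_two, fibPoly_one, fibPoly_zero]
    ring
  | one =>
    calc fibPoly 3
        = (1 + X + X ^ 2) ^ 2 + X * (1 + X) ^ 2 ^ 2 := by
          rw [← fibPoly_two, ← fibPoly_one]
          exact fibPoly_add_two_eq_sq_add 1
      _ = 1 + X + X ^ 2 + X ^ 4 * (1 + X) := by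
          rw [add_pow_char_pow, CharTwo.add_sq, CharTwo.add_sq]
          ring
      _ = fibPoly 2 + X ^ 2 ^ 2 * fibPoly 1 := by rw [fibPoly_two, fibPoly_one]; norm_num
  | more m ih ih' =>
    calc fibPoly (m + 4)
        = fibPoly (m + 3) ^ 2 + X * fibPoly (m + 2) ^ 2 ^ 2 := fibPoly_add_two_eq_sq_add (m + 2)
      _ = (fibPoly (m + 2) + X ^ 2 ^ (m + 2) * fibPoly (m + 1)) ^ 2 +
            X * (fibPoly (m + 1) + X ^ 2 ^ (m + 1) * fibPoly m) ^ 2 ^ 2 := by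
          rw [← ih, ← ih']
      _ = fibPoly (m + 2) ^ 2 + X * fibPoly (m + 1) ^ 4 +
            X ^ 2 ^ (m + 3) * (fibPoly (m + 1) ^ 2 + X * fibPoly m ^ 4) := by
          rw [CharTwo.add_sq, add_pow_char_pow]
          ring
      _ = fibPoly (m + 3) + X ^ 2 ^ (m + 3) * fibPoly (m + 2) := by
          rw [← fibPoly_add_two_eq_sq_add, ← fibPoly_add_two_eq_sq_add]

lemma isCoprime_X_fibPoly (m : ℕ) : IsCoprime X (fibPoly m) := by
  induction m using Nat.twoStepInduction with
  | zero => simpa only [fibPoly_zero] using isCoprime_one_right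
  | one => exact fibPoly_one ▸ ⟨-1, 1, by ring⟩
  | more m _ ih =>
    rw [fibPoly_add_two_eq_sq_add]
    exact ih.pow_right.add_mul_left_right _

lemma isCoprime_fibPoly_succ (m : ℕ) : IsCoprime (fibPoly m) (fibPoly (m + 1)) := by
  induction m with
  | zero => simpa only [fibPoly_zero] using isCoprime_one_left
  | succ m ih =>
    rw [fibPoly_add_two_eq_sq_add, sq, IsCoprime.mul_add_left_right_iff]
    exact (isCoprime_X_fibPoly (m + 1)).symm.mul_right ih.symm.pow_right

lemma fibPoly_dvd_fibPoly_succ_sub_one (m : ℕ) : fibPoly m ∣ fibPoly (m + 1) - 1 := by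
  have idempotent : fibPoly m ∣ fibPoly (m + 1) * (fibPoly (m + 1) - 1) :=
    ⟨X ^ 2 ^ (m + 1) - X * fibPoly m ^ 3, by
      linear_combination fibPoly_add_two_eq_add_X_pow_mul m - fibPoly_add_two_eq_sq_add m⟩
  exact (isCoprime_fibPoly_succ m).dvd_of_dvd_mul_left idempotent

lemma fibPoly_dvd_X_pow_sub_X (m : ℕ) : fibPoly m ∣ X ^ 2 ^ (m + 2) - X := by
  have succ_eq_one : AdjoinRoot.mk (fibPoly m) (fibPoly (m + 1)) = 1 :=
    AdjoinRoot.mk_eq_mk.2 (fibPoly_dvd_fibPoly_succ_sub_one m)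
  have add_two_eq_one : AdjoinRoot.mk (fibPoly m) (fibPoly (m + 2)) = 1 := by
    rw [fibPoly_add_two_eq_add_X_pow_mul, map_add, map_mul, AdjoinRoot.mk_self, mul_zero,
      add_zero, succ_eq_one]
  have recursions_agree := congrArg (AdjoinRoot.mk (fibPoly m))
    ((fibPoly_add_two_eq_add_X_pow_mul (m + 1)).symm.trans (fibPoly_add_two_eq_sq_add (m + 1)))
  rw [← AdjoinRoot.mk_eq_mk]
  simpa only [map_add, map_mul, map_pow, add_assoc, Nat.reduceAdd, succ_eq_one, add_two_eq_one,
    one_pow, mul_one, add_right_inj] using recursions_agree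

theorem fibPoly_dvd (m : ℕ) (hm : 3 ≤ m) :
    fibPoly m ∣ (X ^ (2 ^ (m + 2) - 1) + 1 : Polynomial (ZMod 2)) := by
  have dvd_X_mul : fibPoly m ∣ X * (X ^ (2 ^ (m + 2) - 1) + 1) := by
    rw [mul_add, mul_one, mul_pow_sub_one (by positivity), ← CharTwo.sub_eq_add]
    exact fibPoly_dvd_X_pow_sub_X m
  exact (isCoprime_X_fibPoly m).symm.dvd_of_dvd_mul_left dvd_X_mul
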